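/- arXiv:2305.06722 — 2 statements merged into one kernel-verified Lean document; each statement's English description precedes it below -/
import Mathlib

section
/- There exists C > 0 such that for every differentiable u : ℝ³ → ℂ with ∇u ∈ L²(ℝ³) and ‖u‖_{L²} = 1 the following holds. Set w = |u|² and ŵ(k) = ∫_{ℝ³} e^{−ik·x} w(x) dx. Then the functions k ↦ v(k)ŵ(k) and k ↦ |k|·v(k)·ŵ(k) are integrable on ℝ³, and for every x ∈ ℝ³: |∫_{ℝ³} v(k) e^{ik·x} ŵ(k) dk| ≤ C ‖u‖_{H¹}^{3/2} and |∫_{ℝ³} v(k) k e^{ik·x} ŵ(k) dk| ≤ C ‖u‖_{H¹}^{3/2}. (Up to a universal constant these two integrals represent the convolution V∗|u|² and its gradient ∇(V∗|u|²) for the effective pair potential V.) -/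
open MeasureTheory
open scoped ENNReal

noncomputable section

/-- The dispersion relation `ω(k) = √(1+|k|²)` of the massive scalar field. -/
def ω (k : EuclideanSpace ℝ (Fin 3)) : ℝ := Real.sqrt (1 + ‖k‖ ^ 2)

/-- `v(k) = −4/(ω(k)(|k|²+ω(k))) + 2/(|k|²+ω(k))²`, which is `(2π)^{3/2}` times the
Fourier transform of the effective pair potential `V` of the dressed Nelson model. -/
def vker (k : EuclideanSpace ℝ (Fin 3)) : ℝ :=
  -4 / (ω k * (‖k‖ ^ 2 + ω k)) + 2 / (‖k‖ ^ 2 + ω k) ^ 2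

/-- The square of the `H¹`-norm, `‖u‖_{H¹}² = ‖u‖_{L²}² + ‖∇u‖_{L²}²`. -/
def H1sq (u : EuclideanSpace ℝ (Fin 3) → ℂ) : ℝ :=
  (∫ x, ‖u x‖ ^ 2) + ∫ x, ‖fderiv ℝ u x‖ ^ 2

/-- The `H¹`-norm of `u`. -/
def H1norm (u : EuclideanSpace ℝ (Fin 3) → ℂ) : ℝ := Real.sqrt (H1sq u)

/-- `ŵ(k) = ∫ e^{−ik·y} |u(y)|² dy`, the unnormalized Fourier transform of `w = |u|²`. -/
def what (u : EuclideanSpace ℝ (Fin 3) → ℂ) (k : EuclideanSpace ℝ (Fin 3)) : ℂ :=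
  ∫ y, Complex.exp (-(Complex.I * ((inner ℝ k y : ℝ) : ℂ))) * ((‖u y‖ ^ 2 : ℝ) : ℂ)

/-- `k` viewed as a vector in `ℂ³`. -/
def kC (k : EuclideanSpace ℝ (Fin 3)) : EuclideanSpace ℂ (Fin 3) :=
  (WithLp.equiv 2 (Fin 3 → ℂ)).symm (fun j => (k j : ℂ))

/-!
The weight `(1 + |k|) v(k)` is `O((1 + |k|²)⁻¹)`, hence square integrable on `ℝ³`. By the
Cauchy–Schwarz inequality both integrals are bounded by a constant times `‖ŵ‖_{L²}`, which by
Plancherel is `(2π)^{3/2} ‖u‖_{L⁴}²`, so everything rests on Ladyzhenskaya's inequality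
`‖u‖_{L⁴}⁴ ≤ ‖u‖_{L²} ‖∇u‖_{L²}³`. Along a line on which `|u|²` is integrable, `u` tends to zero as
soon as `|u||∇u|` is integrable too, so `|u|²` is at most the integral of `|u||∇u|` over that line.
Combining these bounds for the three coordinate directions as in the Loomis–Whitney inequality
handles an arbitrary differentiable `u` without approximation by test functions.
-/

section CoordinateLines

variable {E F : Type*} [NormedAddCommGroup E] [NormedSpace ℝ E] [NormedAddCommGroup F]

theorem two_mul_enorm_le_lintegral_enorm_deriv [NormedSpace ℝ F] [CompleteSpace F] {f : ℝ → F}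
    (hf : Differentiable ℝ f) (hint : Integrable f) (x : ℝ) :
    2 * ‖f x‖ₑ ≤ ∫⁻ t, ‖deriv f t‖ₑ := by
  by_cases htop : ∫⁻ t, ‖deriv f t‖ₑ = ∞
  · simp [htop]
  have hderiv : ∀ t, HasDerivAt f (deriv f t) t := fun t => (hf t).hasDerivAt
  have hint' : Integrable (deriv f) :=
    ⟨aestronglyMeasurable_deriv f volume, lt_top_iff_ne_top.2 htop⟩
  have hIic : ∫ t in Set.Iic x, deriv f t = f x := by
    simpa using integral_Iic_of_hasDerivAt_of_tendsto' (fun t _ => hderiv t) hint'.integrableOn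
      (tendsto_zero_of_hasDerivAt_of_integrableOn_Iic (fun t _ => hderiv t)
        hint'.integrableOn (hint.integrableOn (s := Set.Iic x)))
  have hIoi : ∫ t in Set.Ioi x, deriv f t = -f x := by
    simpa using integral_Ioi_of_hasDerivAt_of_tendsto' (fun t _ => hderiv t) hint'.integrableOn
      (tendsto_zero_of_hasDerivAt_of_integrableOn_Ioi (fun t _ => hderiv t)
        hint'.integrableOn (hint.integrableOn (s := Set.Ioi x)))
  calc 2 * ‖f x‖ₑ = ‖∫ t in Set.Iic x, deriv f t‖ₑ + ‖∫ t in Set.Ioi x, deriv f t‖ₑ := by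
        rw [hIic, hIoi, enorm_neg, two_mul]
    _ ≤ (∫⁻ t in Set.Iic x, ‖deriv f t‖ₑ) + ∫⁻ t in Set.Ioi x, ‖deriv f t‖ₑ :=
        add_le_add (enorm_integral_le_lintegral_enorm _) (enorm_integral_le_lintegral_enorm _)
    _ = ∫⁻ t, ‖deriv f t‖ₑ := by rw [← Set.compl_Iic, lintegral_add_compl _ measurableSet_Iic]

variable [InnerProductSpace ℝ F]

theorem enorm_sq_le_lintegral_enorm_mul_enorm_deriv {f : ℝ → F} (hf : Differentiable ℝ f)
    (hint : Integrable fun t => ‖f t‖ ^ 2) (x : ℝ) :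
    ‖f x‖ₑ ^ 2 ≤ ∫⁻ t, ‖f t‖ₑ * ‖deriv f t‖ₑ := by
  have henorm_deriv_sq : ∀ t, ‖deriv (fun t => ‖f t‖ ^ 2) t‖ₑ ≤ 2 * (‖f t‖ₑ * ‖deriv f t‖ₑ) := by
    intro t
    rw [(hf t).hasDerivAt.norm_sq.deriv, enorm_mul]
    gcongr
    · simp [enorm_eq_nnnorm]
    · simp only [enorm_eq_nnnorm]
      exact_mod_cast nnnorm_inner_le_nnnorm (𝕜 := ℝ) (f t) (deriv f t)
  refine (ENNReal.mul_le_mul_iff_right two_ne_zero ENNReal.ofNat_ne_top).1 ?_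
  calc 2 * ‖f x‖ₑ ^ 2 = 2 * ‖‖f x‖ ^ 2‖ₑ := by rw [enorm_pow, enorm_norm]
    _ ≤ ∫⁻ t, ‖deriv (fun t => ‖f t‖ ^ 2) t‖ₑ :=
        two_mul_enorm_le_lintegral_enorm_deriv (hf.norm_sq ℝ) hint x
    _ ≤ ∫⁻ t, 2 * (‖f t‖ₑ * ‖deriv f t‖ₑ) := lintegral_mono henorm_deriv_sq
    _ = 2 * ∫⁻ t, ‖f t‖ₑ * ‖deriv f t‖ₑ := lintegral_const_mul' _ _ ENNReal.ofNat_ne_top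

theorem enorm_sq_comp_le_lintegral_enorm_mul_enorm_fderiv {u : E → F} (hu : Differentiable ℝ u)
    {γ : ℝ → E} (hγ : Differentiable ℝ γ) (hlip : LipschitzWith 1 γ)
    (hint : Integrable fun t => ‖u (γ t)‖ ^ 2) (x : ℝ) :
    ‖u (γ x)‖ₑ ^ 2 ≤ ∫⁻ t, ‖u (γ t)‖ₑ * ‖fderiv ℝ u (γ t)‖ₑ := by
  have henorm_deriv : ∀ t, ‖deriv (u ∘ γ) t‖ₑ ≤ ‖fderiv ℝ u (γ t)‖ₑ := by
    intro t
    rw [fderiv_comp_deriv t (hu _) (hγ t)]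
    refine enorm_le_iff_norm_le.2 ((fderiv ℝ u (γ t)).le_of_opNorm_le_of_le le_rfl
      (norm_deriv_le_of_lipschitz hlip) |>.trans_eq (by simp))
  refine (enorm_sq_le_lintegral_enorm_mul_enorm_deriv (hu.comp hγ) hint x).trans ?_
  exact lintegral_mono fun t => mul_le_mul_right (henorm_deriv t) _

end CoordinateLines

section LoomisWhitney

theorem sq_lintegral_mul_le {α : Type*} [MeasurableSpace α] {μ : Measure α} {f g : α → ℝ≥0∞}
    (hf : AEMeasurable f μ) (hg : AEMeasurable g μ) :
    (∫⁻ x, f x * g x ∂μ) ^ 2 ≤ (∫⁻ x, f x ^ 2 ∂μ) * ∫⁻ x, g x ^ 2 ∂μ := by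
  have hsqrt (y : ℝ≥0∞) : (y ^ (1 / 2 : ℝ)) ^ 2 = y := by
    rw [← ENNReal.rpow_natCast, ← ENNReal.rpow_mul]; norm_num
  have holder := ENNReal.lintegral_mul_le_Lp_mul_Lq μ Real.HolderConjugate.two_two hf hg
  simpa only [Pi.mul_apply, ENNReal.rpow_two, mul_pow, hsqrt] using pow_le_pow_left' holder 2

variable {α β γ : Type*} [MeasurableSpace α] [MeasurableSpace β] [MeasurableSpace γ]
  {μ : Measure α} {ν : Measure β} {τ : Measure γ} [SFinite μ] [SFinite ν] [SFinite τ]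

theorem lintegral_sq_le_of_le_lintegral_lines {f g : α × β → ℝ≥0∞} (hg : Measurable g)
    (hfst : ∀ᵐ y ∂ν, ∀ x, f (x, y) ≤ ∫⁻ s, g (s, y) ∂μ)
    (hsnd : ∀ᵐ x ∂μ, ∀ y, f (x, y) ≤ ∫⁻ t, g (x, t) ∂ν) :
    ∫⁻ p, f p ^ 2 ∂μ.prod ν ≤ (∫⁻ p, g p ∂μ.prod ν) ^ 2 := by
  calc ∫⁻ p, f p ^ 2 ∂μ.prod ν
      ≤ ∫⁻ p, (∫⁻ t, g (p.1, t) ∂ν) * (∫⁻ s, g (s, p.2) ∂μ) ∂μ.prod ν := by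
        apply lintegral_mono_ae
        filter_upwards [Measure.quasiMeasurePreserving_snd.ae hfst,
          Measure.quasiMeasurePreserving_fst.ae hsnd] with p hp_fst hp_snd
        rw [sq]
        exact mul_le_mul' (hp_snd p.2) (hp_fst p.1)
    _ = (∫⁻ x, ∫⁻ t, g (x, t) ∂ν ∂μ) * ∫⁻ y, ∫⁻ s, g (s, y) ∂μ ∂ν :=
        lintegral_prod_mul hg.lintegral_prod_right'.aemeasurable
          hg.lintegral_prod_left'.aemeasurable
    _ = (∫⁻ p, g p ∂μ.prod ν) ^ 2 := by
        rw [← lintegral_prod _ hg.aemeasurable, ← lintegral_prod_symm _ hg.aemeasurable, sq]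

theorem sq_lintegral_pow_four_le_of_sq_le_lintegral_lines {a b : α × β × γ → ℝ≥0∞}
    (ha : Measurable a) (hb : Measurable b)
    (h₁ : ∀ᵐ q ∂ν.prod τ, ∀ x, a (x, q) ^ 2 ≤ ∫⁻ s, a (s, q) * b (s, q) ∂μ)
    (h₂ : ∀ᵐ x ∂μ, ∀ᵐ z ∂τ, ∀ y, a (x, y, z) ^ 2 ≤ ∫⁻ s, a (x, s, z) * b (x, s, z) ∂ν)
    (h₃ : ∀ᵐ x ∂μ, ∀ᵐ y ∂ν, ∀ z, a (x, y, z) ^ 2 ≤ ∫⁻ s, a (x, y, s) * b (x, y, s) ∂τ) :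
    (∫⁻ p, a p ^ 4 ∂μ.prod (ν.prod τ)) ^ 2 ≤
      (∫⁻ p, a p ^ 2 ∂μ.prod (ν.prod τ)) * (∫⁻ p, b p ^ 2 ∂μ.prod (ν.prod τ)) ^ 3 := by
  -- On a slice with fixed first coordinate, the lines in the first direction control `∫ a ^ 2`;
  -- those in the other two directions control `∫ a ^ 4`.
  set I := ∫⁻ p, a p * b p ∂μ.prod (ν.prod τ) with hI
  have slice_sq : ∀ x, ∫⁻ q, a (x, q) ^ 2 ∂ν.prod τ ≤ I := by
    intro x
    rw [hI, lintegral_prod_symm (fun p => a p * b p) (ha.mul hb).aemeasurable]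
    exact lintegral_mono_ae (h₁.mono fun q hq => hq x)
  have slice_pow_four : ∀ᵐ x ∂μ,
      ∫⁻ q, a (x, q) ^ 4 ∂ν.prod τ ≤ I * ∫⁻ q, b (x, q) ^ 2 ∂ν.prod τ := by
    filter_upwards [h₂, h₃] with x hx₂ hx₃
    have hax : Measurable fun q => a (x, q) := ha.comp measurable_prodMk_left
    have hbx : Measurable fun q => b (x, q) := hb.comp measurable_prodMk_left
    calc ∫⁻ q, a (x, q) ^ 4 ∂ν.prod τ = ∫⁻ q, (a (x, q) ^ 2) ^ 2 ∂ν.prod τ := by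
          simp only [← pow_mul, Nat.reduceMul]
      _ ≤ (∫⁻ q, a (x, q) * b (x, q) ∂ν.prod τ) ^ 2 :=
          lintegral_sq_le_of_le_lintegral_lines (hax.mul hbx) hx₂ hx₃
      _ ≤ (∫⁻ q, a (x, q) ^ 2 ∂ν.prod τ) * ∫⁻ q, b (x, q) ^ 2 ∂ν.prod τ :=
          sq_lintegral_mul_le hax.aemeasurable hbx.aemeasurable
      _ ≤ I * ∫⁻ q, b (x, q) ^ 2 ∂ν.prod τ := by gcongr; exact slice_sq x
  have pow_four : ∫⁻ p, a p ^ 4 ∂μ.prod (ν.prod τ) ≤ I * ∫⁻ p, b p ^ 2 ∂μ.prod (ν.prod τ) := by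
    rw [lintegral_prod _ (ha.pow_const 4).aemeasurable,
      lintegral_prod _ (hb.pow_const 2).aemeasurable,
      ← lintegral_const_mul _ (hb.pow_const 2).lintegral_prod_right']
    exact lintegral_mono_ae slice_pow_four
  calc (∫⁻ p, a p ^ 4 ∂μ.prod (ν.prod τ)) ^ 2
      ≤ I ^ 2 * (∫⁻ p, b p ^ 2 ∂μ.prod (ν.prod τ)) ^ 2 := by
        rw [← mul_pow]; exact pow_le_pow_left' pow_four 2
    _ ≤ ((∫⁻ p, a p ^ 2 ∂μ.prod (ν.prod τ)) * ∫⁻ p, b p ^ 2 ∂μ.prod (ν.prod τ)) *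
          (∫⁻ p, b p ^ 2 ∂μ.prod (ν.prod τ)) ^ 2 := by
        gcongr; exact sq_lintegral_mul_le ha.aemeasurable hb.aemeasurable
    _ = _ := by ring

end LoomisWhitney

section LpTwo

variable {α G H : Type*} [MeasurableSpace α] [NormedAddCommGroup G] [NormedAddCommGroup H]
  {μ : Measure α}

theorem eLpNorm_two_sq (f : α → G) (μ : Measure α) :
    eLpNorm f 2 μ ^ 2 = ∫⁻ x, ‖f x‖ₑ ^ 2 ∂μ := by
  simpa using eLpNorm_nnreal_pow_eq_lintegral (f := f) (p := 2) (μ := μ) two_ne_zero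

theorem eLpNorm_four_pow_four (f : α → G) (μ : Measure α) :
    eLpNorm f 4 μ ^ 4 = ∫⁻ x, ‖f x‖ₑ ^ 4 ∂μ := by
  simpa using eLpNorm_nnreal_pow_eq_lintegral (f := f) (p := 4) (μ := μ) four_ne_zero

theorem eLpNorm_two_sq_ofReal_norm_sq (f : α → G) (μ : Measure α) :
    eLpNorm (fun x => ((‖f x‖ ^ 2 : ℝ) : ℂ)) 2 μ ^ 2 = eLpNorm f 4 μ ^ 4 := by
  have henorm (x : α) : ‖((‖f x‖ ^ 2 : ℝ) : ℂ)‖ₑ = ‖f x‖ₑ ^ 2 := by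
    rw [← ofReal_norm, Complex.norm_real, ofReal_norm, enorm_pow, enorm_norm]
  simp only [eLpNorm_two_sq, eLpNorm_four_pow_four, henorm, ← pow_mul, Nat.reduceMul]

theorem integrable_ofReal_norm_sq {f : α → G} (hf : MemLp f 2 μ) :
    Integrable (fun x => ((‖f x‖ ^ 2 : ℝ) : ℂ)) μ :=
  ((memLp_two_iff_integrable_sq_norm hf.1).1 hf).ofReal

theorem lpNorm_two_eq_sqrt_integral {f : α → G} (hf : AEStronglyMeasurable f μ) :
    lpNorm f 2 μ = √(∫ x, ‖f x‖ ^ 2 ∂μ) := by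
  simp [lpNorm_eq_integral_norm_rpow_toReal two_ne_zero ENNReal.ofNat_ne_top hf,
    Real.sqrt_eq_rpow]

theorem integral_norm_mul_norm_le_lpNorm_two_mul_lpNorm_two {f : α → G} {g : α → H}
    (hf : MemLp f 2 μ) (hg : MemLp g 2 μ) :
    ∫ x, ‖f x‖ * ‖g x‖ ∂μ ≤ lpNorm f 2 μ * lpNorm g 2 μ := by
  have holder := integral_mul_norm_le_Lp_mul_Lq (f := fun x => ‖f x‖) (g := fun x => ‖g x‖)
    Real.HolderConjugate.two_two (by simpa using hf.norm) (by simpa using hg.norm)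
  simpa only [lpNorm_two_eq_sqrt_integral hf.1, lpNorm_two_eq_sqrt_integral hg.1,
    Real.sqrt_eq_rpow, norm_norm, Real.rpow_two] using holder

end LpTwo

section Ladyzhenskaya

/-- The point of Euclidean 3-space with the given coordinates, written with iterated pairs so that
Fubini's theorem for `Measure.prod` applies one coordinate at a time. -/
def euclideanOfCoords (p : ℝ × ℝ × ℝ) : EuclideanSpace ℝ (Fin 3) :=
  !₂[p.1, p.2.1, p.2.2]

theorem measurePreserving_euclideanOfCoords : MeasurePreserving euclideanOfCoords := by
  have hcons := (volume_preserving_piFinSuccAbove (fun _ : Fin 3 => ℝ) 0).symm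
  have hpair := (MeasurePreserving.id (volume : Measure ℝ)).prod
    (volume_preserving_finTwoArrow ℝ).symm
  convert! (PiLp.volume_preserving_toLp (Fin 3)).comp (hcons.comp hpair) using 1
  ext p i
  fin_cases i <;> rfl

theorem isometry_euclideanOfCoords_fst (q : ℝ × ℝ) :
    Isometry fun t => euclideanOfCoords (t, q) :=
  Isometry.of_dist_eq fun s t => by
    simp [euclideanOfCoords, EuclideanSpace.dist_eq, Fin.sum_univ_three]

theorem isometry_euclideanOfCoords_snd (x z : ℝ) :
    Isometry fun t => euclideanOfCoords (x, t, z) :=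
  Isometry.of_dist_eq fun s t => by
    simp [euclideanOfCoords, EuclideanSpace.dist_eq, Fin.sum_univ_three]

theorem isometry_euclideanOfCoords_thd (x y : ℝ) :
    Isometry fun t => euclideanOfCoords (x, y, t) :=
  Isometry.of_dist_eq fun s t => by
    simp [euclideanOfCoords, EuclideanSpace.dist_eq, Fin.sum_univ_three]

theorem differentiable_euclideanOfCoords : Differentiable ℝ euclideanOfCoords := by
  refine (differentiable_euclidean (𝕜 := ℝ)).2 fun i => ?_
  fin_cases i <;> simp [euclideanOfCoords]

variable {F : Type*} [NormedAddCommGroup F] [InnerProductSpace ℝ F]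

theorem sq_lintegral_enorm_pow_four_le_mul_lintegral_enorm_fderiv_sq [CompleteSpace F]
    {u : EuclideanSpace ℝ (Fin 3) → F} (hu : Differentiable ℝ u)
    (hint : Integrable fun x => ‖u x‖ ^ 2) :
    (∫⁻ x, ‖u x‖ₑ ^ 4) ^ 2 ≤ (∫⁻ x, ‖u x‖ₑ ^ 2) * (∫⁻ x, ‖fderiv ℝ u x‖ₑ ^ 2) ^ 3 := by
  have hmp := measurePreserving_euclideanOfCoords
  have hu_meas : Measurable fun x => ‖u x‖ₑ := hu.continuous.enorm.measurable
  have hdu_meas : Measurable fun x => ‖fderiv ℝ u x‖ₑ := (measurable_fderiv ℝ u).enorm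
  have hint' : Integrable (fun p => ‖u (euclideanOfCoords p)‖ ^ 2)
      (volume.prod (volume.prod volume)) :=
    hmp.integrable_comp_of_integrable hint
  have hline {γ : ℝ → ℝ × ℝ × ℝ} (hγ : Differentiable ℝ γ)
      (hiso : Isometry fun t => euclideanOfCoords (γ t)) :=
    enorm_sq_comp_le_lintegral_enorm_mul_enorm_fderiv hu
      (differentiable_euclideanOfCoords.comp hγ) hiso.lipschitz
  rw [← hmp.lintegral_comp (hu_meas.pow_const 4), ← hmp.lintegral_comp (hu_meas.pow_const 2),
    ← hmp.lintegral_comp (hdu_meas.pow_const 2)]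
  refine sq_lintegral_pow_four_le_of_sq_le_lintegral_lines (hu_meas.comp hmp.measurable)
    (hdu_meas.comp hmp.measurable) ?_ ?_ ?_
  · filter_upwards [hint'.prod_left_ae] with q hq
    exact hline (by fun_prop) (isometry_euclideanOfCoords_fst q) hq
  · filter_upwards [hint'.prod_right_ae] with x hx
    filter_upwards [hx.prod_left_ae] with z hz
    exact hline (by fun_prop) (isometry_euclideanOfCoords_snd x z) hz
  · filter_upwards [hint'.prod_right_ae] with x hx
    filter_upwards [hx.prod_right_ae] with y hy
    exact hline (by fun_prop) (isometry_euclideanOfCoords_thd x y) hy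

theorem eLpNorm_four_pow_four_le_mul_eLpNorm_fderiv_pow_three [CompleteSpace F]
    {u : EuclideanSpace ℝ (Fin 3) → F} (hu : Differentiable ℝ u) (hu₂ : MemLp u 2) :
    eLpNorm u 4 volume ^ 4 ≤ eLpNorm u 2 volume * eLpNorm (fderiv ℝ u) 2 volume ^ 3 := by
  refine (ENNReal.pow_le_pow_left_iff two_ne_zero).1 ?_
  rw [mul_pow, pow_right_comm _ 3 2, eLpNorm_two_sq, eLpNorm_two_sq, eLpNorm_four_pow_four]
  exact sq_lintegral_enorm_pow_four_le_mul_lintegral_enorm_fderiv_sq hu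
    ((memLp_two_iff_integrable_sq_norm hu₂.1).1 hu₂)

end Ladyzhenskaya

section Plancherel

open scoped FourierTransform

variable {E F : Type*} [NormedAddCommGroup E] [InnerProductSpace ℝ E] [FiniteDimensional ℝ E]
  [MeasurableSpace E] [BorelSpace E] [NormedAddCommGroup F]

theorem continuous_fourier_of_integrable [NormedSpace ℂ F] {f : E → F} (hf : Integrable f) :
    Continuous (𝓕 f) :=
  VectorFourier.fourierIntegral_continuous (L := innerₗ E) Real.continuous_fourierChar
    continuous_inner hf

theorem integral_fourier_smul_eq_integral_smul_fourier [NormedSpace ℂ F] [CompleteSpace F]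
    {f : E → ℂ} {g : E → F} (hf : Integrable f) (hg : Integrable g) :
    ∫ x, 𝓕 f x • g x = ∫ x, f x • 𝓕 g x := by
  have h := VectorFourier.integral_fourierIntegral_smul_eq_flip (L := innerₗ E)
    Real.continuous_fourierChar continuous_inner hf hg
  rwa [flip_innerₗ] at h

variable [InnerProductSpace ℂ F] [CompleteSpace F]

theorem fourier_ae_eq_fourier_toLp {f : E → F} (hf : Integrable f) (hf₂ : MemLp f 2) :
    𝓕 f =ᵐ[volume] (𝓕 (hf₂.toLp f) : Lp F 2 (volume : Measure E)) := by
  refine ae_eq_of_integral_contDiff_smul_eq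
    (continuous_fourier_of_integrable hf).locallyIntegrable
    ((Lp.memLp _).locallyIntegrable one_le_two) fun φ hφ hφ_supp => ?_
  have hφ_supp' : HasCompactSupport (Complex.ofRealCLM ∘ φ) := hφ_supp.comp_left rfl
  set ψ := hφ_supp'.toSchwartzMap (by fun_prop) with hψ
  have duality_Lp : ∫ x, 𝓕 ψ x • hf₂.toLp f x = ∫ x, ψ x • 𝓕 (hf₂.toLp f) x := by
    simpa using congrArg (fun T => T ψ) (Lp.fourier_toTemperedDistribution_eq (hf₂.toLp f))
  have toLp_eq : ∫ x, 𝓕 ψ x • hf₂.toLp f x = ∫ x, 𝓕 ψ x • f x :=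
    integral_congr_ae (hf₂.coeFn_toLp.mono fun x hx => by simp only [hx])
  have duality : ∫ x, 𝓕 ψ x • f x = ∫ x, ψ x • 𝓕 f x :=
    integral_fourier_smul_eq_integral_smul_fourier ψ.integrable hf
  simpa [hψ] using (duality.symm.trans toLp_eq.symm).trans duality_Lp

theorem eLpNorm_fourier_two {f : E → F} (hf : Integrable f) (hf₂ : MemLp f 2) :
    eLpNorm (𝓕 f) 2 volume = eLpNorm f 2 volume := by
  rw [eLpNorm_congr_ae (fourier_ae_eq_fourier_toLp hf hf₂), ← Lp.enorm_def,
    ← ofReal_norm, Lp.norm_fourier_eq, ofReal_norm, Lp.enorm_toLp]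

end Plancherel

section Dilation

variable {E F : Type*} [NormedAddCommGroup E] [NormedSpace ℝ E] [MeasurableSpace E] [BorelSpace E]
  [FiniteDimensional ℝ E] [NormedAddCommGroup F] (μ : Measure E) [μ.IsAddHaarMeasure]

theorem eLpNorm_two_sq_comp_smul {r : ℝ} (hr : r ≠ 0) (f : E → F) :
    eLpNorm (fun x => f (r • x)) 2 μ ^ 2 =
      ENNReal.ofReal |(r ^ Module.finrank ℝ E)⁻¹| * eLpNorm f 2 μ ^ 2 := by
  have hemb : MeasurableEmbedding (r • · : E → E) :=
    (Homeomorph.smulOfNeZero r hr).measurableEmbedding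
  rw [eLpNorm_two_sq, eLpNorm_two_sq, ← hemb.lintegral_map (fun y => ‖f y‖ₑ ^ 2),
    Measure.map_addHaar_smul μ hr, lintegral_smul_measure, smul_eq_mul]

end Dilation

section Density

open scoped FourierTransform

variable {u : EuclideanSpace ℝ (Fin 3) → ℂ}

theorem H1norm_nonneg (u : EuclideanSpace ℝ (Fin 3) → ℂ) : 0 ≤ H1norm u :=
  Real.sqrt_nonneg _

theorem lpNorm_fderiv_le_H1norm (hdu : MemLp (fderiv ℝ u) 2) :
    lpNorm (fderiv ℝ u) 2 volume ≤ H1norm u := by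
  rw [lpNorm_two_eq_sqrt_integral hdu.1, H1norm, H1sq]
  gcongr
  exact le_add_of_nonneg_left (by positivity)

theorem what_eq_fourier (u : EuclideanSpace ℝ (Fin 3) → ℂ) (k : EuclideanSpace ℝ (Fin 3)) :
    what u k = 𝓕 (fun x => ((‖u x‖ ^ 2 : ℝ) : ℂ)) ((2 * Real.pi)⁻¹ • k) := by
  have hpi : (Real.pi : ℂ) ≠ 0 := by exact_mod_cast Real.pi_ne_zero
  rw [Real.fourier_eq', what]
  congr! 3 with y
  rw [real_inner_smul_right, real_inner_comm]
  push_cast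
  field_simp

theorem continuous_what (hu₂ : MemLp u 2) : Continuous (what u) := by
  rw [funext (what_eq_fourier u)]
  exact (continuous_fourier_of_integrable (integrable_ofReal_norm_sq hu₂)).comp
    (continuous_const_smul _)

theorem eLpNorm_what_sq_le (hu : Differentiable ℝ u) (hu₂ : MemLp u 2)
    (hdu : MemLp (fderiv ℝ u) 2) :
    eLpNorm (what u) 2 volume ^ 2 ≤ ENNReal.ofReal ((2 * Real.pi) ^ 3) *
      (eLpNorm u 2 volume * eLpNorm (fderiv ℝ u) 2 volume ^ 3) := by
  have hfinite : eLpNorm u 4 volume ^ 4 < ∞ :=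
    (eLpNorm_four_pow_four_le_mul_eLpNorm_fderiv_pow_three hu hu₂).trans_lt <|
      ENNReal.mul_lt_top hu₂.2 (ENNReal.pow_lt_top hdu.2)
  have hw₂ : MemLp (fun x => ((‖u x‖ ^ 2 : ℝ) : ℂ)) 2 := by
    refine ⟨(integrable_ofReal_norm_sq hu₂).1, ?_⟩
    rwa [← eLpNorm_two_sq_ofReal_norm_sq, ENNReal.pow_lt_top_iff,
      or_iff_left two_ne_zero] at hfinite
  calc eLpNorm (what u) 2 volume ^ 2
      = ENNReal.ofReal ((2 * Real.pi) ^ 3) *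
          eLpNorm (𝓕 fun x => ((‖u x‖ ^ 2 : ℝ) : ℂ)) 2 volume ^ 2 := by
        rw [funext (what_eq_fourier u),
          eLpNorm_two_sq_comp_smul volume (inv_ne_zero Real.two_pi_pos.ne'),
          finrank_euclideanSpace_fin, inv_pow, inv_inv, abs_of_pos (by positivity)]
    _ = ENNReal.ofReal ((2 * Real.pi) ^ 3) * eLpNorm u 4 volume ^ 4 := by
        rw [eLpNorm_fourier_two (integrable_ofReal_norm_sq hu₂) hw₂,
          eLpNorm_two_sq_ofReal_norm_sq]
    _ ≤ _ := by gcongr; exact eLpNorm_four_pow_four_le_mul_eLpNorm_fderiv_pow_three hu hu₂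

theorem memLp_what (hu : Differentiable ℝ u) (hu₂ : MemLp u 2) (hdu : MemLp (fderiv ℝ u) 2) :
    MemLp (what u) 2 := by
  have hfinite : eLpNorm (what u) 2 volume ^ 2 < ∞ := (eLpNorm_what_sq_le hu hu₂ hdu).trans_lt
    (ENNReal.mul_lt_top ENNReal.ofReal_lt_top
      (ENNReal.mul_lt_top hu₂.2 (ENNReal.pow_lt_top hdu.2)))
  exact ⟨(continuous_what hu₂).aestronglyMeasurable,
    (ENNReal.pow_lt_top_iff.1 hfinite).resolve_right two_ne_zero⟩

theorem lpNorm_what_sq_le (hu : Differentiable ℝ u) (hu₂ : MemLp u 2)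
    (hdu : MemLp (fderiv ℝ u) 2) :
    lpNorm (what u) 2 volume ^ 2 ≤
      (2 * Real.pi) ^ 3 * (lpNorm u 2 volume * lpNorm (fderiv ℝ u) 2 volume ^ 3) := by
  have h := eLpNorm_what_sq_le hu hu₂ hdu
  rw [← ofReal_lpNorm (memLp_what hu hu₂ hdu), ← ofReal_lpNorm hu₂, ← ofReal_lpNorm hdu,
    ← ENNReal.ofReal_pow lpNorm_nonneg, ← ENNReal.ofReal_pow lpNorm_nonneg,
    ← ENNReal.ofReal_mul lpNorm_nonneg, ← ENNReal.ofReal_mul (by positivity)] at h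
  refine (ENNReal.ofReal_le_ofReal_iff ?_).1 h
  have := lpNorm_nonneg (f := u) (p := 2) (μ := volume)
  have := lpNorm_nonneg (f := fderiv ℝ u) (p := 2) (μ := volume)
  positivity

theorem lpNorm_what_le (hu : Differentiable ℝ u) (hu₂ : MemLp u 2)
    (hdu : MemLp (fderiv ℝ u) 2) :
    lpNorm (what u) 2 volume ≤
      √((2 * Real.pi) ^ 3) * ((∫ x, ‖u x‖ ^ 2) ^ (1 / 4 : ℝ) * H1norm u ^ (3 / 2 : ℝ)) := by
  have hH := H1norm_nonneg u
  refine (pow_le_pow_iff_left₀ lpNorm_nonneg (by positivity) two_ne_zero).1 ?_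
  calc lpNorm (what u) 2 volume ^ 2
      ≤ (2 * Real.pi) ^ 3 * (√(∫ x, ‖u x‖ ^ 2) * H1norm u ^ 3) := by
        rw [← lpNorm_two_eq_sqrt_integral hu₂.1]
        exact (lpNorm_what_sq_le hu hu₂ hdu).trans (by
          gcongr; exacts [lpNorm_nonneg, lpNorm_nonneg, lpNorm_fderiv_le_H1norm hdu])
    _ = (√((2 * Real.pi) ^ 3) *
          ((∫ x, ‖u x‖ ^ 2) ^ (1 / 4 : ℝ) * H1norm u ^ (3 / 2 : ℝ))) ^ 2 := by
        rw [mul_pow √_, Real.sq_sqrt (by positivity), mul_pow (_ ^ (1 / 4 : ℝ)), Real.sqrt_eq_rpow,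
          ← Real.rpow_mul_natCast (by positivity), ← Real.rpow_mul_natCast hH]
        norm_num

end Density

section Kernel

theorem memLp_two_inv_one_add_norm_sq {E : Type*} [NormedAddCommGroup E] [NormedSpace ℝ E]
    [FiniteDimensional ℝ E] [MeasurableSpace E] [BorelSpace E] (μ : Measure E)
    [μ.IsAddHaarMeasure] (hdim : Module.finrank ℝ E < 4) :
    MemLp (fun x : E => (1 + ‖x‖ ^ 2)⁻¹) 2 μ := by
  have hcont : Continuous fun x : E => (1 + ‖x‖ ^ 2)⁻¹ :=
    Continuous.inv₀ (by fun_prop) fun x => by positivity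
  refine (memLp_two_iff_integrable_sq hcont.aestronglyMeasurable).2 ?_
  convert! integrable_rpow_neg_one_add_norm_sq (E := E) (μ := μ) (r := 4)
    (by exact_mod_cast hdim) using 2 with x
  rw [neg_div, Real.rpow_neg (by positivity), inv_pow]
  norm_num

theorem one_add_norm_mul_abs_vker_le (k : EuclideanSpace ℝ (Fin 3)) :
    (1 + ‖k‖) * |vker k| ≤ 12 * (1 + ‖k‖ ^ 2)⁻¹ := by
  have hω_sq : ω k ^ 2 = 1 + ‖k‖ ^ 2 := Real.sq_sqrt (by positivity)
  have one_le_ω : 1 ≤ ω k := Real.one_le_sqrt.2 (by simp)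
  have norm_le_ω : ‖k‖ ≤ ω k := Real.le_sqrt_of_sq_le (by simp)
  have hden : ω k ^ 2 ≤ ‖k‖ ^ 2 + ω k := by linarith
  have abs_vker_le : |vker k| ≤ 6 / ω k ^ 3 := calc
    |vker k| ≤ 4 / (ω k * (‖k‖ ^ 2 + ω k)) + 2 / (‖k‖ ^ 2 + ω k) ^ 2 := by
      refine (abs_add_le _ _).trans_eq ?_
      rw [abs_div, abs_div, abs_of_nonneg (by positivity : 0 ≤ ω k * (‖k‖ ^ 2 + ω k)),
        abs_of_nonneg (by positivity : 0 ≤ (‖k‖ ^ 2 + ω k) ^ 2)]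
      norm_num
    _ ≤ 4 / (ω k * ω k ^ 2) + 2 / (ω k ^ 2) ^ 2 := by gcongr
    _ ≤ 4 / ω k ^ 3 + 2 / ω k ^ 3 := by
      rw [← pow_succ', ← pow_mul]
      gcongr
      norm_num
    _ = 6 / ω k ^ 3 := by ring
  calc (1 + ‖k‖) * |vker k| ≤ (2 * ω k) * (6 / ω k ^ 3) := by gcongr; linarith
    _ = 12 * (1 + ‖k‖ ^ 2)⁻¹ := by rw [← hω_sq]; field_simp; norm_num

theorem measurable_vker : Measurable vker := by
  unfold vker ω
  fun_prop

theorem memLp_two_one_add_norm_mul_vker : MemLp (fun k => (1 + ‖k‖) * vker k) 2 := by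
  refine ((memLp_two_inv_one_add_norm_sq volume (by simp)).const_mul 12).mono'
    ((by fun_prop : Measurable fun k : EuclideanSpace ℝ (Fin 3) => 1 + ‖k‖).mul
      measurable_vker).aestronglyMeasurable (ae_of_all _ fun k => ?_)
  rw [norm_mul, Real.norm_of_nonneg (by positivity : 0 ≤ 1 + ‖k‖), Real.norm_eq_abs]
  exact one_add_norm_mul_abs_vker_le k

theorem norm_kC (k : EuclideanSpace ℝ (Fin 3)) : ‖kC k‖ = ‖k‖ := by
  simp [kC, EuclideanSpace.norm_eq]

end Kernel

section Convolution

theorem norm_vker_mul_le (k : EuclideanSpace ℝ (Fin 3)) (z : ℂ) :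
    ‖(vker k : ℂ) * z‖ ≤ ‖(1 + ‖k‖) * vker k‖ * ‖z‖ := by
  rw [norm_mul, norm_mul, Complex.norm_real, Real.norm_of_nonneg (by positivity : 0 ≤ 1 + ‖k‖)]
  gcongr
  exact le_mul_of_one_le_left (norm_nonneg _) (by simp)

theorem norm_mul_norm_vker_mul_le (k : EuclideanSpace ℝ (Fin 3)) (z : ℂ) :
    ‖k‖ * ‖(vker k : ℂ) * z‖ ≤ ‖(1 + ‖k‖) * vker k‖ * ‖z‖ := by
  rw [norm_mul, norm_mul, Complex.norm_real, Real.norm_of_nonneg (by positivity : 0 ≤ 1 + ‖k‖),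
    ← mul_assoc]
  gcongr
  simp

theorem norm_mul_exp_I_mul_mul (a z : ℂ) (θ : ℝ) :
    ‖a * Complex.exp (Complex.I * θ) * z‖ = ‖a * z‖ := by
  rw [norm_mul, norm_mul, Complex.norm_exp_I_mul_ofReal, mul_one, norm_mul]

variable {u : EuclideanSpace ℝ (Fin 3) → ℂ}

theorem integrable_norm_vker_mul_norm_what (hu : Differentiable ℝ u) (hu₂ : MemLp u 2)
    (hdu : MemLp (fderiv ℝ u) 2) :
    Integrable fun k => ‖(1 + ‖k‖) * vker k‖ * ‖what u k‖ :=
  memLp_two_one_add_norm_mul_vker.norm.integrable_mul (memLp_what hu hu₂ hdu).norm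

theorem integral_norm_vker_mul_norm_what_le (hu : Differentiable ℝ u) (hu₂ : MemLp u 2)
    (hdu : MemLp (fderiv ℝ u) 2) :
    ∫ k, ‖(1 + ‖k‖) * vker k‖ * ‖what u k‖ ≤
      lpNorm (fun k => (1 + ‖k‖) * vker k) 2 volume * √((2 * Real.pi) ^ 3) *
        (∫ x, ‖u x‖ ^ 2) ^ (1 / 4 : ℝ) * H1norm u ^ (3 / 2 : ℝ) := by
  calc ∫ k, ‖(1 + ‖k‖) * vker k‖ * ‖what u k‖
      ≤ lpNorm (fun k => (1 + ‖k‖) * vker k) 2 volume * lpNorm (what u) 2 volume :=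
        integral_norm_mul_norm_le_lpNorm_two_mul_lpNorm_two memLp_two_one_add_norm_mul_vker
          (memLp_what hu hu₂ hdu)
    _ ≤ _ := by
        simp only [mul_assoc]
        exact mul_le_mul_of_nonneg_left (lpNorm_what_le hu hu₂ hdu) lpNorm_nonneg

theorem convolution_bounds_general :
    ∃ C > 0, ∀ u : EuclideanSpace ℝ (Fin 3) → ℂ,
      Differentiable ℝ u → MemLp u 2 volume →
      MemLp (fun x => fderiv ℝ u x) 2 volume →
      Integrable (fun k => ((vker k : ℝ) : ℂ) * what u k) volume ∧
      Integrable (fun k => ‖k‖ * ‖((vker k : ℝ) : ℂ) * what u k‖) volume ∧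
      (∀ x : EuclideanSpace ℝ (Fin 3),
        ‖∫ k, ((vker k : ℝ) : ℂ) *
            Complex.exp (Complex.I * ((inner ℝ k x : ℝ) : ℂ)) * what u k‖ ≤
          C * (∫ x, ‖u x‖ ^ 2) ^ (1 / 4 : ℝ) * H1norm u ^ (3 / 2 : ℝ)) ∧
      (∀ x : EuclideanSpace ℝ (Fin 3),
        ‖∫ k, (((vker k : ℝ) : ℂ) *
            Complex.exp (Complex.I * ((inner ℝ k x : ℝ) : ℂ)) * what u k) • kC k‖ ≤
          C * (∫ x, ‖u x‖ ^ 2) ^ (1 / 4 : ℝ) * H1norm u ^ (3 / 2 : ℝ)) := by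
  have hA : 0 ≤ lpNorm (fun k => (1 + ‖k‖) * vker k) 2 volume := lpNorm_nonneg
  refine ⟨lpNorm (fun k => (1 + ‖k‖) * vker k) 2 volume * √((2 * Real.pi) ^ 3) + 1,
    by positivity, fun u hu hu₂ hdu => ?_⟩
  have hG := integrable_norm_vker_mul_norm_what hu hu₂ hdu
  have hG_le := (integral_norm_vker_mul_norm_what_le hu hu₂ hdu).trans <|
    mul_le_mul_of_nonneg_right (mul_le_mul_of_nonneg_right (le_add_of_nonneg_right zero_le_one)
      (by positivity)) (Real.rpow_nonneg (H1norm_nonneg u) _)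
  have hmeas : AEStronglyMeasurable fun k => (vker k : ℂ) * what u k :=
    measurable_vker.complex_ofReal.aestronglyMeasurable.mul
      (continuous_what hu₂).aestronglyMeasurable
  refine ⟨hG.mono' hmeas (ae_of_all _ fun k => norm_vker_mul_le k _),
    hG.mono' (continuous_norm.aestronglyMeasurable.mul hmeas.norm) (ae_of_all _ fun k => ?_),
    fun x => (norm_integral_le_of_norm_le hG (ae_of_all _ fun k => ?_)).trans hG_le,
    fun x => (norm_integral_le_of_norm_le hG (ae_of_all _ fun k => ?_)).trans hG_le⟩
  · rw [Real.norm_of_nonneg (by positivity)]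
    exact norm_mul_norm_vker_mul_le k _
  · rw [norm_mul_exp_I_mul_mul]
    exact norm_vker_mul_le k _
  · rw [norm_smul, norm_kC, norm_mul_exp_I_mul_mul, mul_comm]
    exact norm_mul_norm_vker_mul_le k _

end Convolution

/-- There is `C > 0` such that for every differentiable `u` with `∇u ∈ L²` and `‖u‖_{L²} = 1`:
`k ↦ v(k)ŵ(k)` and `k ↦ |k| v(k) ŵ(k)` are integrable, and for every `x`,
`|∫ v(k) e^{ik·x} ŵ(k) dk| ≤ C‖u‖_{H¹}^{3/2}` and `|∫ v(k) k e^{ik·x} ŵ(k) dk| ≤ C‖u‖_{H¹}^{3/2}`.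
(These integrals represent `V∗|u|²` and `∇(V∗|u|²)` up to a universal constant.) -/
theorem convolution_bounds :
    ∃ C > 0, ∀ u : EuclideanSpace ℝ (Fin 3) → ℂ,
      Differentiable ℝ u → MemLp u 2 volume →
      MemLp (fun x => fderiv ℝ u x) 2 volume →
      (∫ x, ‖u x‖ ^ 2) = 1 →
      Integrable (fun k => ((vker k : ℝ) : ℂ) * what u k) volume ∧
      Integrable (fun k => ‖k‖ * ‖((vker k : ℝ) : ℂ) * what u k‖) volume ∧
      (∀ x : EuclideanSpace ℝ (Fin 3),
        ‖∫ k, ((vker k : ℝ) : ℂ) *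
            Complex.exp (Complex.I * ((inner ℝ k x : ℝ) : ℂ)) * what u k‖ ≤
          C * H1norm u ^ (3 / 2 : ℝ)) ∧
      (∀ x : EuclideanSpace ℝ (Fin 3),
        ‖∫ k, (((vker k : ℝ) : ℂ) *
            Complex.exp (Complex.I * ((inner ℝ k x : ℝ) : ℂ)) * what u k) • kC k‖ ≤
          C * H1norm u ^ (3 / 2 : ℝ)) := by
  obtain ⟨C, hC, h⟩ := convolution_bounds_general
  exact ⟨C, hC, fun u hu hu₂ hdu h₁ => by
    simpa only [h₁, Real.one_rpow, mul_one] using h u hu hu₂ hdu⟩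

end
end

section
/- Let V ∈ L²(ℝ³;ℝ) be the (unique) function such that ∫_{ℝ³} V(x)(∫_{ℝ³} e^{−ik·x}φ(k) dk) dx = ∫_{ℝ³} v(k)φ(k) dk for every Schwartz function φ (i.e. the unnormalized Fourier transform ∫ V(x)e^{−ik·x}dx of V equals v in the distributional/L² sense). Then V ∈ L⁴(ℝ³), i.e. ∫_{ℝ³} |V(x)|⁴ dx < ∞. -/
open MeasureTheory
open scoped ENNReal

noncomputable section

/-!
Since `|v| ≤ 6 / ω³`, the function `v` lies in `Lᵖ(ℝ³)` for every `p > 1`, and `V` is, up to a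
constant factor and a dilation, the `L²` inverse Fourier transform of `v`. So it suffices that the
inverse Fourier transform maps `L² ∩ Lᵖ` into `L^q` for conjugate exponents `1 < p ≤ 2 ≤ q`.

This qualitative Hausdorff–Young theorem holds for every additive `T` bounded from `L¹` to `L^∞` and
from `L²` to `L²`. To bound the measure of `{t < ‖T f‖}`, split `f` according to whether
`A ‖f‖ ^ (1 - p) < t`. There `‖f‖ ≤ (t / A) ‖f‖ ^ p`, so for large `A` the image of this part is
bounded by `t / 2`, and Chebyshev's inequality for the image of the other part gives
`C t⁻² ∫_{t ≤ A ‖f‖ ^ (1 - p)} ‖f‖²`. Multiplying by `t ^ (q - 1)` and integrating over `t`, the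
layer-cake formula for the weight `‖f‖²` turns this into `∫ (A ‖f‖ ^ (1 - p)) ^ (q - 2) ‖f‖²`, which
is a multiple of `∫ ‖f‖ ^ p` because `(1 - p) (q - 2) + 2 = p`.
-/

open Set
open scoped NNReal FourierTransform SchwartzMap

section Interpolation

variable {α β F G : Type*} [MeasurableSpace α] [MeasurableSpace β]
  [NormedAddCommGroup F] [NormedAddCommGroup G] {μ : Measure α} {ν : Measure β} {p q r : ℝ}

theorem eLpNorm_ofReal_lt_top_iff (f : α → F) (hp : 0 < p) :
    eLpNorm f (ENNReal.ofReal p) μ < ∞ ↔ ∫⁻ x, ENNReal.ofReal (‖f x‖ ^ p) ∂μ < ∞ := by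
  rw [eLpNorm_lt_top_iff_lintegral_rpow_enorm_lt_top (by simpa using hp) ENNReal.ofReal_ne_top,
    ENNReal.toReal_ofReal hp.le]
  simp only [← ENNReal.ofReal_rpow_of_nonneg (norm_nonneg _) hp.le, ofReal_norm]

theorem lintegral_rpow_lt_top_of_tail_le {g : β → ℝ} {h : α → ℝ} (hg : 0 ≤ᵐ[ν] g)
    (hgm : AEMeasurable g ν) (hh : 0 ≤ᵐ[μ] h) (hhm : AEMeasurable h μ) (hq : 0 < q) (hrq : r < q)
    {C : ℝ≥0∞} (hC : C ≠ ∞)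
    (htail : ∀ t > 0, ν {y | t < g y} ≤ C * ENNReal.ofReal (t ^ (-r)) * μ {x | t ≤ h x})
    (hfin : ∫⁻ x, ENNReal.ofReal (h x ^ (q - r)) ∂μ < ∞) :
    ∫⁻ y, ENNReal.ofReal (g y ^ q) ∂ν < ∞ := by
  rw [lintegral_rpow_eq_lintegral_meas_le_mul μ hh hhm (sub_pos.2 hrq)] at hfin
  have hlayer : ∫⁻ t in Ioi 0, μ {x | t ≤ h x} * ENNReal.ofReal (t ^ (q - r - 1)) < ∞ :=
    ENNReal.lt_top_of_mul_ne_top_right hfin.ne (by simpa using hrq)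
  rw [lintegral_rpow_eq_lintegral_meas_lt_mul ν hg hgm hq]
  refine ENNReal.mul_lt_top ENNReal.ofReal_lt_top (lt_of_le_of_lt ?_
    (ENNReal.mul_lt_top hC.lt_top hlayer))
  rw [← lintegral_const_mul' _ _ hC]
  refine setLIntegral_mono' measurableSet_Ioi fun t (ht : 0 < t) ↦ ?_
  calc ν {y | t < g y} * ENNReal.ofReal (t ^ (q - 1))
      ≤ C * ENNReal.ofReal (t ^ (-r)) * μ {x | t ≤ h x} * ENNReal.ofReal (t ^ (q - 1)) := by
        gcongr
        exact htail t ht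
    _ = C * (μ {x | t ≤ h x} * (ENNReal.ofReal (t ^ (-r)) * ENNReal.ofReal (t ^ (q - 1)))) := by
        ring
    _ = C * (μ {x | t ≤ h x} * ENNReal.ofReal (t ^ (q - r - 1))) := by
        rw [← ENNReal.ofReal_mul (by positivity), ← Real.rpow_add ht]
        ring_nf

variable {f : α → F} {A : ℝ}

theorem eLpNorm_one_indicator_le {t : ℝ} (hA : 0 < A) (hp : p ≠ 0)
    (hS : MeasurableSet {x | A * ‖f x‖ ^ (1 - p) < t}) :
    eLpNorm ({x | A * ‖f x‖ ^ (1 - p) < t}.indicator f) 1 μ ≤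
      ENNReal.ofReal (t / A) * ∫⁻ x, ENNReal.ofReal (‖f x‖ ^ p) ∂μ := by
  have hpoint : ∀ x ∈ {x | A * ‖f x‖ ^ (1 - p) < t}, ‖f x‖ ≤ t / A * ‖f x‖ ^ p := by
    intro x hx
    rcases (norm_nonneg (f x)).eq_or_lt with h0 | hpos
    · simp [← h0, Real.zero_rpow hp]
    calc ‖f x‖ = ‖f x‖ ^ (1 - p) * ‖f x‖ ^ p := by rw [← Real.rpow_add hpos]; simp
      _ ≤ t / A * ‖f x‖ ^ p := by
        gcongr
        rw [le_div_iff₀' hA]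
        exact hx.le
  rw [eLpNorm_indicator_eq_eLpNorm_restrict hS, eLpNorm_one_eq_lintegral_enorm,
    ← lintegral_const_mul' _ _ ENNReal.ofReal_ne_top]
  refine (setLIntegral_mono' hS fun x hx ↦ ?_).trans (setLIntegral_le_lintegral _ _)
  rw [← ofReal_norm, ← ENNReal.ofReal_mul' (by positivity)]
  exact ENNReal.ofReal_le_ofReal (hpoint x hx)

theorem lintegral_rpow_withDensity_enorm_sq (hpq : p.HolderConjugate q)
    (hf : AEStronglyMeasurable f μ) (hA : 0 < A) :
    ∫⁻ x, ENNReal.ofReal ((A * ‖f x‖ ^ (1 - p)) ^ (q - 2)) ∂μ.withDensity (‖f ·‖ₑ ^ 2) =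
      ENNReal.ofReal (A ^ (q - 2)) * ∫⁻ x, ENNReal.ofReal (‖f x‖ ^ p) ∂μ := by
  have hexp : (1 - p) * (q - 2) + 2 = p := by linear_combination -hpq.mul_eq_add
  rw [lintegral_withDensity_eq_lintegral_mul₀ (by fun_prop)
      (((hf.norm.aemeasurable.pow_const _).const_mul _).pow_const _).ennreal_ofReal,
    ← lintegral_const_mul' _ _ ENNReal.ofReal_ne_top]
  refine lintegral_congr fun x ↦ ?_
  rw [Pi.mul_apply, ← ofReal_norm, ← ENNReal.ofReal_pow (by positivity),
    ← ENNReal.ofReal_mul (by positivity), ← ENNReal.ofReal_mul (by positivity)]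
  congr 1
  rcases (norm_nonneg (f x)).eq_or_lt with h0 | hpos
  · simp [← h0, Real.zero_rpow hpq.ne_zero]
  rw [Real.mul_rpow (by positivity) (by positivity), ← Real.rpow_mul (by positivity),
    mul_left_comm, ← Real.rpow_two, mul_comm (‖f x‖ ^ _), ← Real.rpow_add hpos, hexp]

theorem exists_forall_eLpNorm_one_indicator_le (hf : StronglyMeasurable f)
    (hfp : MemLp f (ENNReal.ofReal p) μ) (hp : 0 < p) (C : ℝ≥0) :
    ∃ A > 0, ∀ t > 0,
      C * eLpNorm ({x | A * ‖f x‖ ^ (1 - p) < t}.indicator f) 1 μ ≤ ENNReal.ofReal (t / 2) := by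
  obtain ⟨K, hK, -⟩ :=
    ENNReal.lt_iff_exists_nnreal_btwn.1 ((eLpNorm_ofReal_lt_top_iff f hp).1 hfp.2)
  refine ⟨2 * (C * K + 1), by positivity, fun t ht ↦ ?_⟩
  have hS : MeasurableSet {x | 2 * (C * K + 1) * ‖f x‖ ^ (1 - p) < t} :=
    measurableSet_lt ((hf.norm.measurable.pow_const _).const_mul _) measurable_const
  calc C * eLpNorm ({x | 2 * (C * K + 1) * ‖f x‖ ^ (1 - p) < t}.indicator f) 1 μ
      ≤ C * (ENNReal.ofReal (t / (2 * (C * K + 1))) * K) := by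
        gcongr
        refine (eLpNorm_one_indicator_le (by positivity) hp.ne' hS).trans ?_
        gcongr
    _ = ENNReal.ofReal (C * (t / (2 * (C * K + 1)) * K)) := by
        rw [ENNReal.ofReal_mul (by positivity), ENNReal.ofReal_mul (by positivity),
          ENNReal.ofReal_coe_nnreal, ENNReal.ofReal_coe_nnreal]
    _ ≤ ENNReal.ofReal (t / 2) := by
        apply ENNReal.ofReal_le_ofReal
        field_simp
        linarith

theorem measure_le_norm_le_eLpNorm_two_sq (hf : AEStronglyMeasurable f μ) {t : ℝ} (ht : 0 < t) :
    μ {x | t ≤ ‖f x‖} ≤ ENNReal.ofReal (t ^ (-2 : ℝ)) * eLpNorm f 2 μ ^ 2 := by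
  have hset : {x | t ≤ ‖f x‖} = {x | ENNReal.ofReal t ≤ ‖f x‖ₑ} := by
    simp only [← ofReal_norm, ENNReal.ofReal_le_ofReal_iff (norm_nonneg _)]
  have hcoef : (ENNReal.ofReal t)⁻¹ ^ (2 : ℝ) = ENNReal.ofReal (t ^ (-2 : ℝ)) := by
    rw [ENNReal.inv_rpow, ← ENNReal.rpow_neg, ENNReal.ofReal_rpow_of_pos ht]
  have hchebyshev := meas_ge_le_mul_pow_eLpNorm_enorm μ two_ne_zero ENNReal.ofNat_ne_top hf
    (ε := ENNReal.ofReal t) (by simpa using ht) (fun h ↦ absurd h ENNReal.ofReal_ne_top)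
  rwa [ENNReal.toReal_ofNat, hcoef, ENNReal.rpow_two, ← hset] at hchebyshev

theorem eLpNorm_two_indicator_sq (f : α → F) {S : Set α} (hS : MeasurableSet S) :
    eLpNorm (S.indicator f) 2 μ ^ 2 = ∫⁻ x in S, ‖f x‖ₑ ^ 2 ∂μ := by
  rw [eLpNorm_indicator_eq_eLpNorm_restrict hS]
  simpa using eLpNorm_nnreal_pow_eq_lintegral (μ := μ.restrict S) (f := f) (p := 2) two_ne_zero

variable {T : Lp F 2 μ →+ Lp G 2 ν} {C₁ C₂ : ℝ≥0}

theorem measure_lt_norm_le_setLIntegral_compl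
    (h₁ : ∀ f, eLpNorm (T f) ∞ ν ≤ C₁ * eLpNorm f 1 μ)
    (h₂ : ∀ f, eLpNorm (T f) 2 ν ≤ C₂ * eLpNorm f 2 μ) (f : Lp F 2 μ) {S : Set α}
    (hS : MeasurableSet S) {t : ℝ} (ht : 0 < t)
    (hSt : C₁ * eLpNorm (S.indicator f) 1 μ ≤ ENNReal.ofReal (t / 2)) :
    ν {y | t < ‖T f y‖} ≤
      (2 * C₂) ^ 2 * ENNReal.ofReal (t ^ (-2 : ℝ)) * ∫⁻ x in Sᶜ, ‖f x‖ₑ ^ 2 ∂μ := by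
  set g : Lp F 2 μ := ((Lp.memLp f).indicator hS).toLp _ with hg
  set b : Lp F 2 μ := ((Lp.memLp f).indicator hS.compl).toLp _ with hb
  have hfgb : f = g + b := by
    rw [hg, hb, ← MemLp.toLp_add]
    simp only [indicator_self_add_compl, Lp.toLp_coeFn]
  have hTg : ∀ᵐ y ∂ν, ‖T g y‖ ≤ t / 2 := by
    have hg₁ : eLpNorm (T g) ∞ ν ≤ ENNReal.ofReal (t / 2) :=
      (h₁ g).trans (by rwa [eLpNorm_congr_ae (MemLp.coeFn_toLp _)])
    filter_upwards [enorm_ae_le_eLpNormEssSup (T g) ν] with y hy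
    rw [← ENNReal.ofReal_le_ofReal_iff (by positivity), ofReal_norm]
    exact hy.trans (eLpNorm_exponent_top.symm.trans_le hg₁)
  have hb₂ : eLpNorm b 2 μ ^ 2 = ∫⁻ x in Sᶜ, ‖f x‖ₑ ^ 2 ∂μ := by
    rw [eLpNorm_congr_ae (MemLp.coeFn_toLp _), eLpNorm_two_indicator_sq _ hS.compl]
  calc ν {y | t < ‖T f y‖} ≤ ν {y | t / 2 ≤ ‖T b y‖} := by
        refine measure_mono_ae ?_
        filter_upwards [Lp.coeFn_add (T g) (T b), hTg] with y hadd hy (hlt : t < ‖T f y‖)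
        rw [hfgb, map_add, hadd, Pi.add_apply] at hlt
        change t / 2 ≤ ‖T b y‖
        linarith [norm_add_le (T g y) (T b y)]
    _ ≤ ENNReal.ofReal ((t / 2) ^ (-2 : ℝ)) * eLpNorm (T b) 2 ν ^ 2 :=
        measure_le_norm_le_eLpNorm_two_sq (Lp.aestronglyMeasurable _) (by positivity)
    _ ≤ ENNReal.ofReal ((t / 2) ^ (-2 : ℝ)) * (C₂ * eLpNorm b 2 μ) ^ 2 := by
        gcongr
        exact h₂ b
    _ = (2 * C₂) ^ 2 * ENNReal.ofReal (t ^ (-2 : ℝ)) * ∫⁻ x in Sᶜ, ‖f x‖ₑ ^ 2 ∂μ := by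
        have hcoef : (t / 2) ^ (-2 : ℝ) = 2 ^ 2 * t ^ (-2 : ℝ) := by
          rw [Real.div_rpow ht.le zero_le_two, Real.rpow_neg zero_le_two, Real.rpow_two]
          field_simp
        rw [hcoef, ENNReal.ofReal_mul (by positivity), ENNReal.ofReal_pow zero_le_two,
          ENNReal.ofReal_ofNat, mul_pow, mul_pow, hb₂]
        ring

theorem memLp_holderConjugate_of_eLpNorm_le
    (h₁ : ∀ f, eLpNorm (T f) ∞ ν ≤ C₁ * eLpNorm f 1 μ)
    (h₂ : ∀ f, eLpNorm (T f) 2 ν ≤ C₂ * eLpNorm f 2 μ) (hpq : p.HolderConjugate q) (hp : p ≤ 2)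
    (f : Lp F 2 μ) (hf : MemLp f (ENNReal.ofReal p) μ) : MemLp (T f) (ENNReal.ofReal q) ν := by
  rcases hp.eq_or_lt with rfl | hp
  · obtain rfl : q = 2 := by linarith [hpq.mul_eq_add]
    simpa only [ENNReal.ofReal_ofNat] using Lp.memLp (T f)
  have hq : 2 < q := by nlinarith [hpq.mul_eq_add, hpq.lt]
  obtain ⟨A, hA, hcut⟩ := exists_forall_eLpNorm_one_indicator_le (Lp.stronglyMeasurable f) hf
    hpq.pos C₁
  set h : α → ℝ := fun x ↦ A * ‖f x‖ ^ (1 - p)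
  have hm : Measurable h := ((Lp.stronglyMeasurable f).norm.measurable.pow_const _).const_mul _
  refine ⟨Lp.aestronglyMeasurable _, (eLpNorm_ofReal_lt_top_iff _ hpq.symm.pos).2 ?_⟩
  refine lintegral_rpow_lt_top_of_tail_le (μ := μ.withDensity (‖f ·‖ₑ ^ 2)) (h := h)
    (C := (2 * C₂) ^ 2) (.of_forall fun _ ↦ norm_nonneg _)
    (Lp.aestronglyMeasurable _).norm.aemeasurable (.of_forall fun _ ↦ by positivity)
    hm.aemeasurable hpq.symm.pos hq (by finiteness) (fun t ht ↦ ?_) ?_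
  · have hcompl : {x | h x < t}ᶜ = {x | t ≤ h x} := by simp only [compl_ofPred, not_lt]
    rw [withDensity_apply _ (measurableSet_le measurable_const hm), ← hcompl]
    exact measure_lt_norm_le_setLIntegral_compl h₁ h₂ f (measurableSet_lt hm measurable_const)
      ht (hcut t ht)
  · rw [lintegral_rpow_withDensity_enorm_sq hpq (Lp.aestronglyMeasurable f) hA]
    exact ENNReal.mul_lt_top ENNReal.ofReal_lt_top
      ((eLpNorm_ofReal_lt_top_iff _ hpq.pos).1 hf.2)

end Interpolation

theorem memLp_comp_smul_iff {E F : Type*} [NormedAddCommGroup E] [NormedSpace ℝ E]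
    [FiniteDimensional ℝ E] [MeasurableSpace E] [BorelSpace E] [NormedAddCommGroup F]
    (μ : Measure E) [μ.IsAddHaarMeasure] (f : E → F) {p : ℝ≥0∞} {R : ℝ} (hR : R ≠ 0) :
    MemLp (fun x ↦ f (R • x)) p μ ↔ MemLp f p μ := by
  suffices ∀ {g : E → F} {S : ℝ}, S ≠ 0 → MemLp g p μ → MemLp (fun x ↦ g (S • x)) p μ by
    refine ⟨fun hf ↦ ?_, this hR⟩
    simpa only [smul_inv_smul₀ hR] using this (inv_ne_zero hR) hf
  intro g S hS hg
  have hmap : MemLp g p (μ.map (S • ·)) := by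
    rw [Measure.map_addHaar_smul μ hS]
    exact hg.smul_measure ENNReal.ofReal_ne_top
  exact hmap.comp_of_map (measurable_const_smul S).aemeasurable

section Fourier

variable {E F : Type*} [NormedAddCommGroup E] [InnerProductSpace ℝ E] [FiniteDimensional ℝ E]
  [MeasurableSpace E] [BorelSpace E]

section NormedSpace

variable [NormedAddCommGroup F] [NormedSpace ℂ F]

theorem continuous_fourierInv {f : E → F} (hf : Integrable f) : Continuous (𝓕⁻ f) :=
  VectorFourier.fourierIntegral_continuous Real.continuous_fourierChar
    (by simp only [LinearMap.neg_apply, innerₗ_apply_apply]; fun_prop) hf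

theorem enorm_fourierInv_le_eLpNorm_one (f : E → F) (x : E) :
    ‖𝓕⁻ f x‖ₑ ≤ eLpNorm f 1 volume := by
  rw [eLpNorm_one_eq_lintegral_enorm, Real.fourierInv_eq]
  refine (enorm_integral_le_lintegral_enorm _).trans_eq (lintegral_congr fun v ↦ ?_)
  simp only [← ofReal_norm, Circle.norm_smul]

theorem integral_fourierInv_smul_eq [CompleteSpace F] (φ : 𝓢(E, ℂ)) {f : E → F}
    (hf : Integrable f) : ∫ x, 𝓕⁻ φ x • f x = ∫ x, φ x • 𝓕⁻ f x := by
  have hflip : (-innerₗ E).flip = -innerₗ E := by ext x y; simp [real_inner_comm]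
  have := VectorFourier.integral_fourierIntegral_smul_eq_flip (𝕜 := ℝ) (L := -innerₗ E)
    (μ := volume) (ν := volume) Real.continuous_fourierChar
    (by simp only [LinearMap.neg_apply, innerₗ_apply_apply]; fun_prop) φ.integrable hf
  rw [hflip] at this
  rw [SchwartzMap.fourierInv_coe]
  exact this

end NormedSpace

variable [NormedAddCommGroup F] [InnerProductSpace ℂ F] [CompleteSpace F]

theorem coeFn_fourierInv_ae_eq (f : Lp F 2 (volume : Measure E)) (hf : Integrable f) :
    (𝓕⁻ f : Lp F 2 (volume : Measure E)) =ᵐ[volume] 𝓕⁻ (f : E → F) := by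
  refine ae_eq_of_integral_contDiff_smul_eq ((Lp.memLp _).locallyIntegrable (by norm_num))
    (continuous_fourierInv hf).locallyIntegrable fun g hg hgc ↦ ?_
  have hgc' : HasCompactSupport (Complex.ofRealCLM ∘ g) := hgc.comp_left rfl
  set φ : 𝓢(E, ℂ) := hgc'.toSchwartzMap (by fun_prop)
  have h : Lp.toTemperedDistribution (𝓕⁻ f) φ = Lp.toTemperedDistribution f (𝓕⁻ φ) := by
    rw [← Lp.fourierInv_toTemperedDistribution_eq, TemperedDistribution.fourierInv_apply]
  rw [Lp.toTemperedDistribution_apply, Lp.toTemperedDistribution_apply,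
    integral_fourierInv_smul_eq φ hf] at h
  simpa [φ] using h

theorem eLpNorm_top_fourierInv_le (f : Lp F 2 (volume : Measure E)) :
    eLpNorm (𝓕⁻ f : Lp F 2 (volume : Measure E)) ∞ volume ≤ eLpNorm f 1 volume := by
  by_cases hf : Integrable f
  · rw [eLpNorm_congr_ae (coeFn_fourierInv_ae_eq f hf), eLpNorm_exponent_top]
    exact essSup_le_of_ae_le _ (.of_forall (enorm_fourierInv_le_eLpNorm_one _))
  · rw [← memLp_one_iff_integrable, MemLp, not_and, not_lt, top_le_iff] at hf
    rw [hf (Lp.aestronglyMeasurable f)]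
    exact le_top

theorem eLpNorm_two_fourierInv (f : Lp F 2 (volume : Measure E)) :
    eLpNorm (𝓕⁻ f : Lp F 2 (volume : Measure E)) 2 volume = eLpNorm f 2 volume := by
  rw [← Lp.enorm_def, ← Lp.enorm_def, ← ofReal_norm, ← ofReal_norm, ← Lp.norm_fourier_eq (𝓕⁻ f),
    FourierTransform.fourier_fourierInv_eq]

variable {p q : ℝ}

theorem memLp_fourierInv (hpq : p.HolderConjugate q) (hp : p ≤ 2)
    (f : Lp F 2 (volume : Measure E)) (hf : MemLp f (ENNReal.ofReal p)) :
    MemLp (𝓕⁻ f : Lp F 2 (volume : Measure E)) (ENNReal.ofReal q) :=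
  memLp_holderConjugate_of_eLpNorm_le
    (T := .mk' (𝓕⁻ ·) FourierTransform.fourierInv_add) (C₁ := 1) (C₂ := 1)
    (fun f ↦ by simpa using eLpNorm_top_fourierInv_le f)
    (fun f ↦ by simpa using (eLpNorm_two_fourierInv f).le) hpq hp f hf

theorem eq_fourierInv_of_forall_integral_eq {u w : Lp F 2 (volume : Measure E)}
    (h : ∀ φ : 𝓢(E, ℂ), ∫ x, 𝓕 φ x • u x = ∫ x, φ x • w x) : u = 𝓕⁻ w := by
  suffices hw : 𝓕 u = w by rw [← hw, FourierTransform.fourierInv_fourier_eq]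
  apply LinearMap.ker_eq_bot.1
    (Lp.ker_toTemperedDistributionCLM_eq_bot (F := F) (E := E) (μ := volume) (p := 2))
  change Lp.toTemperedDistribution (𝓕 u) = Lp.toTemperedDistribution w
  ext φ
  rw [← Lp.fourier_toTemperedDistribution_eq, TemperedDistribution.fourier_apply,
    Lp.toTemperedDistribution_apply, Lp.toTemperedDistribution_apply, h φ]

theorem memLp_of_forall_integral_fourier_smul_eq (hpq : p.HolderConjugate q) (hp : p ≤ 2)
    {u w : E → F} (hu : MemLp u 2) (hw : MemLp w 2) (hwp : MemLp w (ENNReal.ofReal p))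
    (h : ∀ φ : 𝓢(E, ℂ), ∫ x, 𝓕 φ x • u x = ∫ k, φ k • w k) : MemLp u (ENNReal.ofReal q) := by
  have heq : hu.toLp u = 𝓕⁻ (hw.toLp w) := by
    refine eq_fourierInv_of_forall_integral_eq fun φ ↦ ?_
    have hux : ∫ x, 𝓕 φ x • hu.toLp u x = ∫ x, 𝓕 φ x • u x := by
      refine integral_congr_ae ?_
      filter_upwards [hu.coeFn_toLp] with x hx using by rw [hx]
    have hwk : ∫ k, φ k • hw.toLp w k = ∫ k, φ k • w k := by
      refine integral_congr_ae ?_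
      filter_upwards [hw.coeFn_toLp] with k hk using by rw [hk]
    rw [hux, hwk, h φ]
  rw [← memLp_congr_ae hu.coeFn_toLp, heq]
  exact memLp_fourierInv hpq hp _ ((memLp_congr_ae hw.coeFn_toLp).2 hwp)

theorem integral_cexp_inner_mul_eq_fourier (φ : E → ℂ) (x : E) :
    ∫ k, Complex.exp (-(Complex.I * (inner ℝ k x : ℝ))) * φ k = 𝓕 φ ((2 * Real.pi)⁻¹ • x) := by
  rw [Real.fourier_eq']
  refine integral_congr_ae (.of_forall fun k ↦ ?_)
  simp only [smul_eq_mul, inner_smul_right]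
  congr 2
  push_cast
  field_simp

theorem memLp_of_forall_integral_cexp_inner_mul_smul_eq (hpq : p.HolderConjugate q) (hp : p ≤ 2)
    {u w : E → F} (hu : MemLp u 2) (hw : MemLp w 2) (hwp : MemLp w (ENNReal.ofReal p))
    (h : ∀ φ : 𝓢(E, ℂ),
      ∫ x, (∫ k, Complex.exp (-(Complex.I * (inner ℝ k x : ℝ))) * φ k) • u x = ∫ k, φ k • w k) :
    MemLp u (ENNReal.ofReal q) := by
  have hpi : 2 * Real.pi ≠ 0 := Real.two_pi_pos.ne'
  set c : ℝ := |((2 * Real.pi) ^ Module.finrank ℝ E)⁻¹|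
  rw [← memLp_comp_smul_iff volume u hpi] at hu ⊢
  refine memLp_of_forall_integral_fourier_smul_eq hpq hp hu (hw.const_smul c) (hwp.const_smul c)
    fun φ ↦ ?_
  calc ∫ y, 𝓕 φ y • u ((2 * Real.pi) • y)
      = ∫ y, 𝓕 φ ((2 * Real.pi)⁻¹ • (2 * Real.pi) • y) • u ((2 * Real.pi) • y) := by
        simp only [inv_smul_smul₀ hpi]
    _ = c • ∫ x, 𝓕 φ ((2 * Real.pi)⁻¹ • x) • u x :=
        Measure.integral_comp_smul volume (fun x ↦ 𝓕 φ ((2 * Real.pi)⁻¹ • x) • u x) _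
    _ = c • ∫ k, φ k • w k := by
        simp only [← h φ, integral_cexp_inner_mul_eq_fourier, SchwartzMap.fourier_coe]
    _ = ∫ k, φ k • (c • w) k := by
        simp only [← integral_smul, Pi.smul_apply, smul_comm c]

end Fourier

theorem memLp_one_add_norm_sq_rpow_neg {E : Type*} [NormedAddCommGroup E] [NormedSpace ℝ E]
    [FiniteDimensional ℝ E] [MeasurableSpace E] [BorelSpace E] (μ : Measure E) [μ.IsAddHaarMeasure]
    {p r : ℝ} (hp : 0 < p) (hr : Module.finrank ℝ E < 2 * r * p) :
    MemLp (fun x : E ↦ (1 + ‖x‖ ^ 2) ^ (-r)) (ENNReal.ofReal p) μ := by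
  have hm : Measurable fun x : E ↦ (1 + ‖x‖ ^ 2) ^ (-r) := by fun_prop
  rw [← integrable_norm_rpow_iff hm.aestronglyMeasurable (by simpa using hp)
    ENNReal.ofReal_ne_top]
  refine (integrable_rpow_neg_one_add_norm_sq hr).congr (.of_forall fun x ↦ ?_)
  dsimp only
  rw [Real.norm_of_nonneg (by positivity), ENNReal.toReal_ofReal hp.le,
    ← Real.rpow_mul (by positivity)]
  ring_nf

theorem ω_sq (k : EuclideanSpace ℝ (Fin 3)) : ω k ^ 2 = 1 + ‖k‖ ^ 2 :=
  Real.sq_sqrt (by positivity)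

theorem one_le_ω (k : EuclideanSpace ℝ (Fin 3)) : 1 ≤ ω k :=
  Real.one_le_sqrt.2 (le_add_of_nonneg_right (by positivity))

theorem ω_pow_three (k : EuclideanSpace ℝ (Fin 3)) :
    ω k ^ 3 = (1 + ‖k‖ ^ 2) ^ (3 / 2 : ℝ) := by
  rw [ω, Real.sqrt_eq_rpow, ← Real.rpow_mul_natCast (by positivity)]
  norm_num

theorem abs_vker_le (k : EuclideanSpace ℝ (Fin 3)) : |vker k| ≤ 6 / ω k ^ 3 := by
  have hω := one_le_ω k
  have hω₂ : ω k ^ 2 ≤ ‖k‖ ^ 2 + ω k := by linarith [ω_sq k]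
  calc |vker k| ≤ |-4 / (ω k * (‖k‖ ^ 2 + ω k))| + |2 / (‖k‖ ^ 2 + ω k) ^ 2| := abs_add_le _ _
    _ = 4 / (ω k * (‖k‖ ^ 2 + ω k)) + 2 / (‖k‖ ^ 2 + ω k) ^ 2 := by
        rw [neg_div, abs_neg, abs_of_nonneg (by positivity), abs_of_nonneg (by positivity)]
    _ ≤ 4 / (ω k * ω k ^ 2) + 2 / (ω k ^ 2) ^ 2 := by gcongr
    _ ≤ 4 / ω k ^ 3 + 2 / ω k ^ 3 := by
        rw [← pow_succ', ← pow_mul]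
        gcongr
        norm_num
    _ = 6 / ω k ^ 3 := by ring

theorem memLp_vker {p : ℝ} (hp : 1 < p) : MemLp vker (ENNReal.ofReal p) := by
  have hm : Measurable vker := by unfold vker ω; fun_prop
  have hbracket := memLp_one_add_norm_sq_rpow_neg (volume : Measure (EuclideanSpace ℝ (Fin 3)))
    (p := p) (r := 3 / 2) (by positivity) (by rw [finrank_euclideanSpace_fin]; norm_num; linarith)
  refine (hbracket.const_mul 6).mono' hm.aestronglyMeasurable (.of_forall fun k ↦ ?_)
  rw [Real.rpow_neg (by positivity), ← ω_pow_three, ← div_eq_mul_inv]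
  exact abs_vker_le k

theorem V_mem_L4_general {V : EuclideanSpace ℝ (Fin 3) → ℂ} (hV2 : MemLp V 2)
    (hVFourier : ∀ φ : 𝓢(EuclideanSpace ℝ (Fin 3), ℂ),
      ∫ x, V x * ∫ k, Complex.exp (-(Complex.I * (inner ℝ k x : ℝ))) * φ k =
        ∫ k, (vker k : ℂ) * φ k)
    {q : ℝ≥0∞} (hq : 2 ≤ q) (hq_top : q ≠ ∞) : MemLp V q := by
  lift q to ℝ≥0 using hq_top
  replace hq : (2 : ℝ) ≤ q := by exact_mod_cast hq
  have hpq := (Real.HolderConjugate.conjExponent (one_lt_two.trans_le hq)).symm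
  have hp : Real.conjExponent q ≤ 2 := by
    rw [Real.conjExponent, div_le_iff₀ (by linarith)]
    linarith
  have hv {p : ℝ} (hp : 1 < p) : MemLp (fun k ↦ (vker k : ℂ)) (ENNReal.ofReal p) :=
    (memLp_vker hp).ofReal
  rw [← ENNReal.ofReal_coe_nnreal]
  refine memLp_of_forall_integral_cexp_inner_mul_smul_eq hpq hp hV2
    (by simpa only [ENNReal.ofReal_ofNat] using hv one_lt_two) (hv hpq.lt) fun φ ↦ ?_
  simpa only [smul_eq_mul, mul_comm (V _), mul_comm (φ _)] using hVFourier φ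

/-- If `V ∈ L²(ℝ³;ℝ)` satisfies `∫ V(x)(∫ e^{−ik·x}φ(k) dk) dx = ∫ v(k)φ(k) dk` for every
Schwartz function `φ` (i.e. the unnormalized Fourier transform of `V` equals `v`), then
`V ∈ L⁴(ℝ³)`: `∫ |V(x)|⁴ dx < ∞`. -/
theorem V_mem_L4 (V : EuclideanSpace ℝ (Fin 3) → ℝ) (hV2 : MemLp V 2 volume)
    (hVFourier : ∀ φ : SchwartzMap (EuclideanSpace ℝ (Fin 3)) ℂ,
      (∫ x, ((V x : ℝ) : ℂ) *
          ∫ k, Complex.exp (-(Complex.I * ((inner ℝ k x : ℝ) : ℂ))) * φ k) =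
        ∫ k, ((vker k : ℝ) : ℂ) * φ k) :
    ∫⁻ x, ENNReal.ofReal (|V x| ^ 4) < ⊤ := by
  have hV4 : MemLp (fun x ↦ (V x : ℂ)) (ENNReal.ofReal 4) :=
    V_mem_L4_general hV2.ofReal hVFourier (by norm_num) ENNReal.ofReal_ne_top
  simpa using (eLpNorm_ofReal_lt_top_iff _ four_pos).1 hV4.2

end
end
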